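/- Fix θ ∈ [0,2π) and a real 2×2 matrix R = (r_{ij}) with det R = 1, and let α, β, γ be built from c := (|r₁₁| + |r₂₂| + 2)/|r₁₂| if r₁₂ ≠ 0 and c := |r₁₁ r₂₁| if r₁₂ = 0. Assume there exists a real-valued absolutely continuous function g on [a,b] with g(a) = g(b) = 0, ∫ₐᵇ p|g'|² < ∞, and g(x)w(x) > 0 a.e. on (a,b), and let ε > 0 satisfy μ_{1/p}({x ∈ [a,b] : p(x)g(x)w(x) < ε}) ≤ 1/(2γ²). Then every λ ∈ ℂ with Im λ ≠ 0 for which there exists a solution (φ, u) of −(pφ')' + qφ = λwφ with φ not identically zero and (φ(b), u(b))ᵀ = e^{iθ} R (φ(a), u(a))ᵀ, satisfies |Im λ| ≤ (2/ε)·β·γ·‖g'‖_{p,2} and |Re λ| ≤ (2/ε)·(β·γ·‖g'‖_{p,2} + (β² + γ²‖q‖_{L¹})·‖g‖_∞). -/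

import Mathlib

open MeasureTheory Real Complex

/-!
Let `N` and `D` be the norms of `φ` and `u` in `L²(1/p)`. Multiplying the equation by `φ̄` and
integrating by parts gives `[u φ̄]ₐᵇ = ∫ q|φ|² - λ ∫ w|φ|² + D²`. The boundary form on the left is
real, so a nonreal `λ` forces `∫ w|φ|² = 0`, and then `D² ≤ α ‖φ‖_∞²`. Together with the
Sobolev-type bound `‖φ‖_∞² ≤ N² / ‖1/p‖_{L¹} + 2 N D` this yields `D ≤ β N` and `‖φ‖_∞ ≤ γ N`.

Multiplying instead by `g φ̄` removes the boundary terms and gives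
`λ ∫ g w|φ|² = ∫ q|φ|² g + ∫ |u|² g / p + ∫ g' u φ̄`. The right-hand side is bounded by a
multiple of `N²`, and since `p g w ≥ ε` outside a set of small `1/p`-measure, the integral on the
left is at least `ε N² / 2`. The boundary conditions enter only through the boundary form.
-/

open Set
open scoped ComplexConjugate

section Primitives

variable {E F : Type*} [NormedAddCommGroup E] [NormedSpace ℝ E]
  [NormedAddCommGroup F] [NormedSpace ℝ F] {a b : ℝ}

theorem absolutelyContinuousOnInterval_of_dist_le {X Y : Type*} [PseudoMetricSpace X]
    [PseudoMetricSpace Y] {f : ℝ → X} {g : ℝ → Y} (hg : AbsolutelyContinuousOnInterval g a b)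
    (hfg : ∀ x ∈ uIcc a b, ∀ y ∈ uIcc a b, dist (f x) (f y) ≤ dist (g x) (g y)) :
    AbsolutelyContinuousOnInterval f a b := by
  rw [absolutelyContinuousOnInterval_iff] at hg ⊢
  intro ε hε
  obtain ⟨δ, hδ, hδε⟩ := hg ε hε
  refine ⟨δ, hδ, fun I hI hlen => (Finset.sum_le_sum fun i hi => ?_).trans_lt (hδε I hI hlen)⟩
  exact hfg _ (hI.1 i hi).1 _ (hI.1 i hi).2

theorem absolutelyContinuousOnInterval_const {X : Type*} [PseudoMetricSpace X] (x : X) :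
    AbsolutelyContinuousOnInterval (fun _ : ℝ => x) a b :=
  (LipschitzWith.const x).lipschitzOnWith.absolutelyContinuousOnInterval

theorem absolutelyContinuousOnInterval_integral {f : ℝ → E}
    (hf : IntervalIntegrable f volume a b) :
    AbsolutelyContinuousOnInterval (fun x => ∫ t in a..x, f t) a b := by
  refine absolutelyContinuousOnInterval_of_dist_le
    (hf.norm.absolutelyContinuousOnInterval_intervalIntegral left_mem_uIcc) fun x hx y hy => ?_
  have hfx : IntervalIntegrable f volume a x := hf.mono_set (uIcc_subset_uIcc_left hx)
  have hfy : IntervalIntegrable f volume a y := hf.mono_set (uIcc_subset_uIcc_left hy)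
  rw [dist_eq_norm, dist_eq_norm, intervalIntegral.integral_interval_sub_left hfx hfy,
    intervalIntegral.integral_interval_sub_left hfx.norm hfy.norm]
  exact intervalIntegral.norm_integral_le_abs_integral_norm

/-- `f` is absolutely continuous on the interval with endpoints `a` and `b`, with derivative `f'`
almost everywhere. This is encoded by the integral identity, so that the derivative is only
determined up to a null set. -/
structure IsPrimitiveOn (f f' : ℝ → E) (a b : ℝ) : Prop where
  intervalIntegrable : IntervalIntegrable f' volume a b
  eq_add_integral : ∀ x ∈ uIcc a b, f x = f a + ∫ t in a..x, f' t

namespace IsPrimitiveOn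

theorem const (c : E) : IsPrimitiveOn (fun _ => c) (fun _ => 0) a b :=
  ⟨intervalIntegrable_const, by simp⟩

theorem continuousOn {f f' : ℝ → E} (hf : IsPrimitiveOn f f' a b) : ContinuousOn f (uIcc a b) :=
  (continuousOn_const.add
    (intervalIntegral.continuousOn_primitive_interval' hf.intervalIntegrable left_mem_uIcc)).congr
    hf.eq_add_integral

theorem clm_comp [CompleteSpace E] [CompleteSpace F] {f f' : ℝ → E}
    (hf : IsPrimitiveOn f f' a b) (L : E →L[ℝ] F) :
    IsPrimitiveOn (fun x => L (f x)) (fun x => L (f' x)) a b where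
  intervalIntegrable :=
    ⟨L.integrable_comp hf.intervalIntegrable.1, L.integrable_comp hf.intervalIntegrable.2⟩
  eq_add_integral x hx := by
    rw [L.intervalIntegral_comp_comm
      (hf.intervalIntegrable.mono_set (uIcc_subset_uIcc_left hx)), ← map_add,
      ← hf.eq_add_integral x hx]

theorem mul {A : Type*} [NormedRing A] [NormMulClass A] [NormedAlgebra ℝ A] [CompleteSpace A]
    {f f' g g' : ℝ → A} (hf : IsPrimitiveOn f f' a b) (hg : IsPrimitiveOn g g' a b) :
    IsPrimitiveOn (fun x => f x * g x) (fun x => f' x * g x + f x * g' x) a b := by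
  have hint : IntervalIntegrable (fun x => f' x * g x + f x * g' x) volume a b :=
    (hf.intervalIntegrable.mul_continuousOn hg.continuousOn).add
      (hg.intervalIntegrable.continuousOn_mul hf.continuousOn)
  have hac : AbsolutelyContinuousOnInterval (fun x => (f a + ∫ t in a..x, f' t) •
      (g a + ∫ t in a..x, g' t) - ∫ t in a..x, (f' t * g t + f t * g' t)) a b :=
    (((absolutelyContinuousOnInterval_const _).fun_add
        (absolutelyContinuousOnInterval_integral hf.intervalIntegrable)).fun_smul
      ((absolutelyContinuousOnInterval_const _).fun_add
        (absolutelyContinuousOnInterval_integral hg.intervalIntegrable))).fun_sub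
      (absolutelyContinuousOnInterval_integral hint)
  obtain ⟨C, hC⟩ := hac.const_of_ae_hasDerivAt_zero <| by
    filter_upwards [hf.intervalIntegrable.ae_hasDerivAt_integral,
      hg.intervalIntegrable.ae_hasDerivAt_integral, hint.ae_hasDerivAt_integral]
      with x hFx hGx hFGx hx
    have hderiv := (((hFx hx a left_mem_uIcc).const_add (f a)).fun_mul
      ((hGx hx a left_mem_uIcc).const_add (g a))).fun_sub (hFGx hx a left_mem_uIcc)
    rw [← hf.eq_add_integral x hx, ← hg.eq_add_integral x hx, sub_self] at hderiv
    exact hderiv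
  refine ⟨hint, fun x hx => ?_⟩
  have hCx := hC x hx
  rw [← hf.eq_add_integral x hx, ← hg.eq_add_integral x hx, ← hC a left_mem_uIcc] at hCx
  simpa [sub_eq_iff_eq_add] using hCx

theorem norm_sub_le_integral_norm {f f' : ℝ → E} (hf : IsPrimitiveOn f f' a b) (hab : a ≤ b)
    {x y : ℝ} (hx : x ∈ Icc a b) (hy : y ∈ Icc a b) :
    ‖f x - f y‖ ≤ ∫ t in a..b, ‖f' t‖ := by
  wlog hyx : y ≤ x generalizing x y
  · rw [norm_sub_rev]
    exact this hy hx (le_of_not_ge hyx)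
  have hint := hf.intervalIntegrable
  rw [← uIcc_of_le hab] at hx hy
  rw [hf.eq_add_integral x hx, hf.eq_add_integral y hy, add_sub_add_left_eq_sub,
    intervalIntegral.integral_interval_sub_left (hint.mono_set (uIcc_subset_uIcc_left hx))
      (hint.mono_set (uIcc_subset_uIcc_left hy))]
  rw [uIcc_of_le hab] at hx hy
  calc ‖∫ t in y..x, f' t‖ ≤ ∫ t in y..x, ‖f' t‖ :=
        intervalIntegral.norm_integral_le_integral_norm hyx
    _ ≤ ∫ t in a..b, ‖f' t‖ := intervalIntegral.integral_mono_interval hy.1 hyx hx.2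
        (.of_forall fun t => norm_nonneg _) hint.norm

end IsPrimitiveOn

end Primitives

section IntegralInequalities

theorem integral_le_sqrt_mul_sqrt_of_sq_le_mul {α : Type*} [MeasurableSpace α] {μ : Measure α}
    {A B C : α → ℝ} (hA : Integrable A μ) (hC : Integrable C μ) (hA₀ : 0 ≤ᵐ[μ] A)
    (hB₀ : 0 ≤ᵐ[μ] B) (hC₀ : 0 ≤ᵐ[μ] C) (hB : ∀ᵐ x ∂μ, B x ^ 2 ≤ A x * C x) :
    ∫ x, B x ∂μ ≤ √(∫ x, A x ∂μ) * √(∫ x, C x ∂μ) := by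
  have sq_sqrt_ae {f : α → ℝ} (hf₀ : 0 ≤ᵐ[μ] f) : (fun x => √(f x) ^ 2) =ᵐ[μ] f :=
    hf₀.mono fun x hx => sq_sqrt hx
  have memLp_sqrt {f : α → ℝ} (hf : Integrable f μ) (hf₀ : 0 ≤ᵐ[μ] f) :
      MemLp (fun x => √(f x)) 2 μ :=
    (memLp_two_iff_integrable_sq
      (continuous_sqrt.comp_aestronglyMeasurable hf.aestronglyMeasurable)).2
      (hf.congr (sq_sqrt_ae hf₀).symm)
  have hholder := integral_mul_le_Lp_mul_Lq_of_nonneg HolderConjugate.two_two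
    (.of_forall fun x => sqrt_nonneg (A x)) (.of_forall fun x => sqrt_nonneg (C x))
    (by simpa using memLp_sqrt hA hA₀) (by simpa using memLp_sqrt hC hC₀)
  simp only [rpow_two, ← sqrt_eq_rpow] at hholder
  rw [integral_congr_ae (sq_sqrt_ae hA₀), integral_congr_ae (sq_sqrt_ae hC₀)] at hholder
  refine (integral_mono_of_nonneg hB₀
    ((memLp_sqrt hA hA₀).integrable_mul (memLp_sqrt hC hC₀)) ?_).trans hholder
  filter_upwards [hA₀, hB] with x hAx hBx
  simpa [sqrt_mul hAx] using le_sqrt_of_sq_le hBx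

theorem mul_integral_sub_le_integral_mul {α : Type*} [MeasurableSpace α] {μ : Measure α}
    {f h : α → ℝ} {ε k K : ℝ} (hf : Integrable f μ) (hhf : Integrable (fun x => h x * f x) μ)
    (hf₀ : 0 ≤ᵐ[μ] f) (hfK : ∀ᵐ x ∂μ, f x ≤ K) (hh₀ : 0 ≤ᵐ[μ] h) (hε : 0 ≤ ε) (hK : 0 ≤ K)
    (hk : 0 ≤ k) (hμ : μ {x | h x < ε} ≤ ENNReal.ofReal k) :
    ε * (∫ x, f x ∂μ - K * k) ≤ ∫ x, h x * f x ∂μ := by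
  set S := toMeasurable μ {x | h x < ε}
  have hSm : MeasurableSet S := measurableSet_toMeasurable _ _
  have hSμ : μ S ≤ ENNReal.ofReal k := (measure_toMeasurable _).trans_le hμ
  have hSint : Integrable (S.indicator fun _ => K) μ :=
    (integrable_indicator_iff hSm).2 (integrableOn_const (hSμ.trans_lt ENNReal.ofReal_lt_top).ne)
  calc ε * (∫ x, f x ∂μ - K * k) ≤ ε * (∫ x, f x ∂μ - ∫ x, S.indicator (fun _ => K) x ∂μ) := by
        rw [integral_indicator_const K hSm, smul_eq_mul, mul_comm K]
        gcongr
        exact ENNReal.toReal_le_of_le_ofReal hk hSμ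
    _ = ∫ x, ε * (f x - S.indicator (fun _ => K) x) ∂μ := by
        rw [integral_const_mul, integral_sub hf hSint]
    _ ≤ ∫ x, h x * f x ∂μ := by
        refine integral_mono_ae ((hf.sub hSint).const_mul ε) hhf ?_
        filter_upwards [hf₀, hfK, hh₀] with x hfx hfKx hhx
        by_cases hxS : x ∈ S
        · rw [indicator_of_mem hxS]
          exact (mul_nonpos_of_nonneg_of_nonpos hε (sub_nonpos.2 hfKx)).trans
            (mul_nonneg hhx hfx)
        · have hεh : ε ≤ h x := not_lt.1 fun hlt => hxS (subset_toMeasurable μ _ hlt)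
          rw [indicator_of_notMem hxS, sub_zero]
          exact mul_le_mul_of_nonneg_right hεh hfx

theorem integrable_withDensity_ofReal_iff {α E : Type*} [MeasurableSpace α] {μ : Measure α}
    [NormedAddCommGroup E] [NormedSpace ℝ E] {r : α → ℝ} {f : α → E} (hr : AEMeasurable r μ)
    (hr₀ : 0 ≤ᵐ[μ] r) :
    Integrable f (μ.withDensity fun x => ENNReal.ofReal (r x)) ↔
      Integrable (fun x => r x • f x) μ := by
  rw [integrable_withDensity_iff_integrable_smul₀' hr.ennreal_ofReal
    (.of_forall fun x => ENNReal.ofReal_lt_top)]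
  refine integrable_congr (hr₀.mono fun x hx => ?_)
  simp only [ENNReal.toReal_ofReal hx]

theorem integral_withDensity_ofReal {α E : Type*} [MeasurableSpace α] {μ : Measure α}
    [NormedAddCommGroup E] [NormedSpace ℝ E] {r : α → ℝ} {f : α → E} (hr : AEMeasurable r μ)
    (hr₀ : 0 ≤ᵐ[μ] r) :
    ∫ x, f x ∂μ.withDensity (fun x => ENNReal.ofReal (r x)) = ∫ x, r x • f x ∂μ := by
  rw [integral_withDensity_eq_integral_toReal_smul₀ hr.ennreal_ofReal
    (.of_forall fun x => ENNReal.ofReal_lt_top)]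
  refine integral_congr_ae (hr₀.mono fun x hx => ?_)
  simp only [ENNReal.toReal_ofReal hx]

variable {a b : ℝ}

theorem intervalIntegral_pos_of_ae_pos (hab : a < b) {f : ℝ → ℝ}
    (hf : IntervalIntegrable f volume a b) (hf₀ : ∀ᵐ x ∂volume.restrict (Ioc a b), 0 < f x) :
    0 < ∫ t in a..b, f t := by
  rw [intervalIntegral.integral_of_le hab.le,
    integral_pos_iff_support_of_nonneg_ae (hf₀.mono fun x hx => hx.le) hf.1]
  have hsupp : Function.support f =ᵐ[volume.restrict (Ioc a b)] univ :=
    Filter.eventuallyEq_univ.2 (hf₀.mono fun x hx => hx.ne')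
  simp [measure_congr hsupp, hab]

theorem norm_integral_mul_le_integral_norm_mul {A : Type*} [NormedRing A] [NormedSpace ℝ A]
    (hab : a ≤ b) {f h : ℝ → A} {K : ℝ} (hf : IntervalIntegrable f volume a b)
    (hh : ∀ x ∈ Icc a b, ‖h x‖ ≤ K) :
    ‖∫ t in a..b, f t * h t‖ ≤ (∫ t in a..b, ‖f t‖) * K := by
  rw [← intervalIntegral.integral_mul_const]
  refine intervalIntegral.norm_integral_le_of_norm_le hab (.of_forall fun t ht => ?_)
    (hf.norm.mul_const K)
  exact (norm_mul_le _ _).trans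
    (mul_le_mul_of_nonneg_left (hh t (Ioc_subset_Icc_self ht)) (norm_nonneg _))

theorem abs_integral_mul_sq_norm_mul_le {E : Type*} [SeminormedAddCommGroup E] (hab : a ≤ b)
    {r h : ℝ → ℝ} {f : ℝ → E} {K S : ℝ} (hr : IntervalIntegrable r volume a b)
    (hf : ∀ x ∈ Icc a b, ‖f x‖ ≤ K) (hh : ∀ x ∈ Icc a b, |h x| ≤ S) :
    |∫ t in a..b, r t * ‖f t‖ ^ 2 * h t| ≤ (∫ t in a..b, |r t|) * (K ^ 2 * S) := by
  simp only [mul_assoc]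
  refine norm_integral_mul_le_integral_norm_mul hab hr fun x hx => ?_
  rw [norm_mul, norm_pow, norm_norm, norm_eq_abs (h x)]
  gcongr
  · exact hf x hx
  · exact hh x hx

/-- The norm of `f` in the weighted space `L²((a, b); r)`. -/
noncomputable def weightedL2Norm {E : Type*} [Norm E] (r : ℝ → ℝ) (f : ℝ → E) (a b : ℝ) : ℝ :=
  √(∫ t in a..b, r t * ‖f t‖ ^ 2)

theorem weightedL2Norm_nonneg {E : Type*} [Norm E] (r : ℝ → ℝ) (f : ℝ → E) :
    0 ≤ weightedL2Norm r f a b :=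
  sqrt_nonneg _

theorem sq_weightedL2Norm {E : Type*} [Norm E] (hab : a ≤ b) {r : ℝ → ℝ} (f : ℝ → E)
    (hr : ∀ᵐ x ∂volume.restrict (Ioc a b), 0 ≤ r x) :
    weightedL2Norm r f a b ^ 2 = ∫ t in a..b, r t * ‖f t‖ ^ 2 := by
  refine sq_sqrt (intervalIntegral.integral_nonneg_of_ae_restrict hab ?_)
  rw [Measure.restrict_congr_set Ioc_ae_eq_Icc.symm]
  filter_upwards [hr] with x hx using mul_nonneg hx (sq_nonneg _)

theorem abs_integral_mul_sq_norm_mul_le_sq_weightedL2Norm_mul {E : Type*} [Norm E] (hab : a ≤ b)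
    {r h : ℝ → ℝ} {f : ℝ → E} {S : ℝ} (hr : ∀ᵐ x ∂volume.restrict (Ioc a b), 0 ≤ r x)
    (hf : IntervalIntegrable (fun t => r t * ‖f t‖ ^ 2) volume a b)
    (hh : ∀ x ∈ Icc a b, |h x| ≤ S) :
    |∫ t in a..b, r t * ‖f t‖ ^ 2 * h t| ≤ weightedL2Norm r f a b ^ 2 * S := by
  refine (norm_integral_mul_le_integral_norm_mul hab hf hh).trans_eq ?_
  rw [sq_weightedL2Norm hab f hr, intervalIntegral.integral_of_le hab,
    intervalIntegral.integral_of_le hab]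
  congr 1
  exact integral_congr_ae (hr.mono fun x hx => norm_of_nonneg (mul_nonneg hx (sq_nonneg _)))

theorem integral_le_weightedL2Norm_mul {E F : Type*} [Norm E] [Norm F] (hab : a ≤ b)
    {r s B : ℝ → ℝ} {f : ℝ → E} {h : ℝ → F}
    (hf : IntervalIntegrable (fun t => r t * ‖f t‖ ^ 2) volume a b)
    (hh : IntervalIntegrable (fun t => s t * ‖h t‖ ^ 2) volume a b)
    (hr : ∀ᵐ x ∂volume.restrict (Ioc a b), 0 ≤ r x)
    (hs : ∀ᵐ x ∂volume.restrict (Ioc a b), 0 ≤ s x)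
    (hB₀ : ∀ᵐ x ∂volume.restrict (Ioc a b), 0 ≤ B x)
    (hB : ∀ᵐ x ∂volume.restrict (Ioc a b), B x ^ 2 = r x * s x * (‖f x‖ * ‖h x‖) ^ 2) :
    ∫ t in a..b, B t ≤ weightedL2Norm r f a b * weightedL2Norm s h a b := by
  simp only [weightedL2Norm, intervalIntegral.integral_of_le hab]
  refine integral_le_sqrt_mul_sqrt_of_sq_le_mul hf.1 hh.1
    (hr.mono fun x hx => mul_nonneg hx (sq_nonneg _)) hB₀
    (hs.mono fun x hx => mul_nonneg hx (sq_nonneg _)) (hB.mono fun x hx => ?_)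
  rw [hx]
  exact le_of_eq (by ring)

end IntegralInequalities

/-- The pair `(φ, u)` solves `-(pφ')' + qφ = lam w φ` on `[a, b]` in the Carathéodory sense, with
`u` in the role of the quasi-derivative `pφ'`. -/
structure IsSturmLiouvilleSolution (p q w : ℝ → ℝ) (lam : ℂ) (a b : ℝ) (φ u : ℝ → ℂ) : Prop where
  isPrimitiveOn : IsPrimitiveOn φ (fun t => u t / p t) a b
  isPrimitiveOn_quasiDeriv : IsPrimitiveOn u (fun t => (q t - lam * w t) * φ t) a b

/-- The boundary form `[u φ̄]ₐᵇ` arising from integration by parts in the quadratic form of the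
Sturm–Liouville expression. -/
noncomputable def boundaryForm (φ u : ℝ → ℂ) (a b : ℝ) : ℂ :=
  u b * conj (φ b) - u a * conj (φ a)

section SturmLiouville

variable {a b : ℝ} {p q w g g' : ℝ → ℝ} {lam : ℂ} {φ u : ℝ → ℂ}

theorem intervalIntegrable_ofReal {f : ℝ → ℝ} (hf : IntervalIntegrable f volume a b) :
    IntervalIntegrable (fun x => (f x : ℂ)) volume a b :=
  ⟨hf.1.ofReal, hf.2.ofReal⟩

/-- The constant `β` comes from completing the square in `D ^ 2 ≤ α (κ N ^ 2 + 2 N D)`. -/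
theorem le_mul_of_sq_le_mul_sq {α κ N D M : ℝ} (hα : 0 ≤ α) (hκ : 0 ≤ κ) (hN : 0 ≤ N)
    (hD : D ^ 2 ≤ α * M ^ 2) (hM : M ^ 2 ≤ κ * N ^ 2 + 2 * N * D) :
    D ≤ (√(α * (κ + α)) + α) * N := by
  have hsq : (D - α * N) ^ 2 ≤ α * (κ + α) * N ^ 2 := by
    linarith [mul_le_mul_of_nonneg_left hM hα]
  have habs : |D - α * N| ≤ √(α * (κ + α)) * N := by
    simpa [sqrt_mul (by positivity : 0 ≤ α * (κ + α)), sqrt_sq hN] using abs_le_sqrt hsq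
  linarith [le_abs_self (D - α * N)]

namespace IsSturmLiouvilleSolution

theorem of_continuousOn (hp : IntervalIntegrable (fun x => 1 / p x) volume a b)
    (hq : IntervalIntegrable q volume a b) (hw : IntervalIntegrable w volume a b)
    (hφc : ContinuousOn φ (uIcc a b)) (huc : ContinuousOn u (uIcc a b))
    (hφ : ∀ x ∈ uIcc a b, φ x = φ a + ∫ t in a..x, u t / (p t : ℂ))
    (hu : ∀ x ∈ uIcc a b, u x = u a + ∫ t in a..x, ((q t : ℂ) - lam * (w t : ℂ)) * φ t) :
    IsSturmLiouvilleSolution p q w lam a b φ u where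
  isPrimitiveOn :=
    ⟨((intervalIntegrable_ofReal hp).mul_continuousOn huc).congr fun x _ => by
      simp only [ofReal_div, ofReal_one, one_div_mul_eq_div], hφ⟩
  isPrimitiveOn_quasiDeriv :=
    ⟨((intervalIntegrable_ofReal hq).sub ((intervalIntegrable_ofReal hw).const_mul lam))
      |>.mul_continuousOn hφc, hu⟩

theorem isPrimitiveOn_conj (hs : IsSturmLiouvilleSolution p q w lam a b φ u) :
    IsPrimitiveOn (fun x => conj (φ x)) (fun x => conj (u x) / p x) a b := by
  simpa using hs.isPrimitiveOn.clm_comp conjCLE.toContinuousLinearMap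

theorem continuousOn (hs : IsSturmLiouvilleSolution p q w lam a b φ u) :
    ContinuousOn φ (uIcc a b) :=
  hs.isPrimitiveOn.continuousOn

theorem continuousOn_quasiDeriv (hs : IsSturmLiouvilleSolution p q w lam a b φ u) :
    ContinuousOn u (uIcc a b) :=
  hs.isPrimitiveOn_quasiDeriv.continuousOn

/-- Integrating the derivative of `g u φ̄` over `[a, b]`. -/
theorem green_identity (hs : IsSturmLiouvilleSolution p q w lam a b φ u)
    (hp : IntervalIntegrable (fun x => 1 / p x) volume a b)
    (hq : IntervalIntegrable q volume a b) (hw : IntervalIntegrable w volume a b)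
    (hg : IsPrimitiveOn g g' a b) :
    g b * (u b * conj (φ b)) - g a * (u a * conj (φ a)) =
      ((∫ t in a..b, q t * ‖φ t‖ ^ 2 * g t : ℝ) : ℂ)
        - lam * (∫ t in a..b, w t * ‖φ t‖ ^ 2 * g t : ℝ)
        + (∫ t in a..b, 1 / p t * ‖u t‖ ^ 2 * g t : ℝ)
        + ∫ t in a..b, g' t * u t * conj (φ t) := by
  have int_mul {r : ℝ → ℝ} {f : ℝ → ℂ} (hr : IntervalIntegrable r volume a b)
      (hf : ContinuousOn f (uIcc a b)) :
      IntervalIntegrable (fun t => ((r t * ‖f t‖ ^ 2 * g t : ℝ) : ℂ)) volume a b :=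
    intervalIntegrable_ofReal
      ((hr.mul_continuousOn (hf.norm.pow 2)).mul_continuousOn hg.continuousOn)
  have hQ := int_mul hq hs.continuousOn
  have hW := int_mul hw hs.continuousOn
  have hD := int_mul hp hs.continuousOn_quasiDeriv
  have hT : IntervalIntegrable (fun t => g' t * u t * conj (φ t)) volume a b :=
    ((intervalIntegrable_ofReal hg.intervalIntegrable).mul_continuousOn
      hs.continuousOn_quasiDeriv).mul_continuousOn hs.isPrimitiveOn_conj.continuousOn
  have hprod := ((hg.clm_comp ofRealCLM).mul
    (hs.isPrimitiveOn_quasiDeriv.mul hs.isPrimitiveOn_conj)).eq_add_integral b right_mem_uIcc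
  simp only [ofRealCLM_apply] at hprod
  simp only [← intervalIntegral.integral_ofReal]
  rw [hprod, add_sub_cancel_left, ← intervalIntegral.integral_const_mul,
    ← intervalIntegral.integral_sub hQ (hW.const_mul _),
    ← intervalIntegral.integral_add (hQ.sub (hW.const_mul _)) hD,
    ← intervalIntegral.integral_add ((hQ.sub (hW.const_mul _)).add hD) hT]
  refine intervalIntegral.integral_congr fun t _ => ?_
  simp only [ofReal_mul, ofReal_pow, ← mul_conj', ofReal_div, ofReal_one]
  ring

theorem mul_integral_eq_of_eq_zero (hs : IsSturmLiouvilleSolution p q w lam a b φ u)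
    (hp : IntervalIntegrable (fun x => 1 / p x) volume a b)
    (hq : IntervalIntegrable q volume a b) (hw : IntervalIntegrable w volume a b)
    (hg : IsPrimitiveOn g g' a b) (hga : g a = 0) (hgb : g b = 0) :
    lam * (∫ t in a..b, w t * ‖φ t‖ ^ 2 * g t : ℝ) =
      (∫ t in a..b, q t * ‖φ t‖ ^ 2 * g t : ℝ) + (∫ t in a..b, 1 / p t * ‖u t‖ ^ 2 * g t : ℝ)
        + ∫ t in a..b, g' t * u t * conj (φ t) := by
  have hgreen := hs.green_identity hp hq hw hg
  simp only [hga, hgb, ofReal_zero, zero_mul, sub_zero] at hgreen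
  linear_combination hgreen

theorem boundaryForm_eq (hs : IsSturmLiouvilleSolution p q w lam a b φ u)
    (hp : IntervalIntegrable (fun x => 1 / p x) volume a b)
    (hq : IntervalIntegrable q volume a b) (hw : IntervalIntegrable w volume a b) :
    boundaryForm φ u a b =
      ((∫ t in a..b, q t * ‖φ t‖ ^ 2 : ℝ) : ℂ) - lam * (∫ t in a..b, w t * ‖φ t‖ ^ 2 : ℝ)
        + (∫ t in a..b, 1 / p t * ‖u t‖ ^ 2 : ℝ) := by
  simpa [boundaryForm] using hs.green_identity hp hq hw (IsPrimitiveOn.const 1)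

theorem sq_norm_sub_sq_norm_le (hs : IsSturmLiouvilleSolution p q w lam a b φ u) (hab : a ≤ b)
    (hp₀ : ∀ᵐ x ∂volume.restrict (Ioc a b), 0 < p x)
    (hp : IntervalIntegrable (fun x => 1 / p x) volume a b)
    {x y : ℝ} (hx : x ∈ Icc a b) (hy : y ∈ Icc a b) :
    ‖φ x‖ ^ 2 - ‖φ y‖ ^ 2 ≤
      2 * weightedL2Norm (fun x => 1 / p x) φ a b * weightedL2Norm (fun x => 1 / p x) u a b := by
  have hφ := hs.continuousOn.norm
  have hu := hs.continuousOn_quasiDeriv.norm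
  have hp₀' : ∀ᵐ x ∂volume.restrict (Ioc a b), 0 ≤ 1 / p x :=
    hp₀.mono fun x hx => one_div_nonneg.2 hx.le
  have hsq := hs.isPrimitiveOn.mul hs.isPrimitiveOn_conj
  calc ‖φ x‖ ^ 2 - ‖φ y‖ ^ 2 ≤ ‖φ x * conj (φ x) - φ y * conj (φ y)‖ := by
        rw [mul_conj', mul_conj']
        norm_cast
        exact le_abs_self _
    _ ≤ ∫ t in a..b, ‖u t / p t * conj (φ t) + φ t * (conj (u t) / p t)‖ :=
        hsq.norm_sub_le_integral_norm hab hx hy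
    _ ≤ ∫ t in a..b, 2 * (1 / p t * (‖φ t‖ * ‖u t‖)) := by
        refine intervalIntegral.integral_mono_ae_restrict hab hsq.intervalIntegrable.norm
          ((hp.mul_continuousOn (hφ.mul hu)).const_mul 2) ?_
        rw [Measure.restrict_congr_set Ioc_ae_eq_Icc.symm]
        filter_upwards [hp₀] with t ht
        refine (norm_add_le _ _).trans_eq ?_
        simp only [norm_mul, norm_div, RCLike.norm_conj, norm_real, norm_of_nonneg ht.le]
        ring
    _ = 2 * ∫ t in a..b, 1 / p t * (‖φ t‖ * ‖u t‖) := intervalIntegral.integral_const_mul _ _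
    _ ≤ 2 * (weightedL2Norm (fun x => 1 / p x) φ a b *
          weightedL2Norm (fun x => 1 / p x) u a b) := by
        gcongr
        exact integral_le_weightedL2Norm_mul hab (hp.mul_continuousOn (hφ.pow 2))
          (hp.mul_continuousOn (hu.pow 2)) hp₀' hp₀'
          (hp₀'.mono fun t ht => mul_nonneg ht (by positivity)) (.of_forall fun t => by ring)
    _ = _ := (mul_assoc _ _ _).symm

theorem sq_norm_le (hs : IsSturmLiouvilleSolution p q w lam a b φ u) (hab : a < b)
    (hp₀ : ∀ᵐ x ∂volume.restrict (Ioc a b), 0 < p x)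
    (hp : IntervalIntegrable (fun x => 1 / p x) volume a b) {x : ℝ} (hx : x ∈ Icc a b) :
    ‖φ x‖ ^ 2 ≤
      1 / (∫ t in a..b, 1 / p t) * weightedL2Norm (fun x => 1 / p x) φ a b ^ 2 +
        2 * weightedL2Norm (fun x => 1 / p x) φ a b * weightedL2Norm (fun x => 1 / p x) u a b := by
  set N := weightedL2Norm (fun x => 1 / p x) φ a b
  set D := weightedL2Norm (fun x => 1 / p x) u a b
  have hp₀' : ∀ᵐ x ∂volume.restrict (Ioc a b), 0 < 1 / p x :=
    hp₀.mono fun x hx => one_div_pos.2 hx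
  have hP : 0 < ∫ t in a..b, 1 / p t := intervalIntegral_pos_of_ae_pos hab hp hp₀'
  have hmean : (∫ t in a..b, 1 / p t) * (‖φ x‖ ^ 2 - 2 * N * D) ≤ N ^ 2 := by
    rw [sq_weightedL2Norm hab.le φ (hp₀'.mono fun x hx => hx.le),
      ← intervalIntegral.integral_mul_const]
    refine intervalIntegral.integral_mono_ae_restrict hab.le (hp.mul_const _)
      (hp.mul_continuousOn (hs.continuousOn.norm.pow 2)) ?_
    rw [Measure.restrict_congr_set Ioc_ae_eq_Icc.symm]
    filter_upwards [hp₀', ae_restrict_mem measurableSet_Ioc] with y hpy hy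
    gcongr
    linarith [hs.sq_norm_sub_sq_norm_le hab.le hp₀ hp hx (Ioc_subset_Icc_self hy)]
  rw [← sub_le_iff_le_add, one_div_mul_eq_div, le_div_iff₀' hP]
  exact hmean

theorem sq_weightedL2Norm_quasiDeriv_le (hs : IsSturmLiouvilleSolution p q w lam a b φ u)
    (hab : a ≤ b) (hp₀ : ∀ᵐ x ∂volume.restrict (Ioc a b), 0 < p x)
    (hp : IntervalIntegrable (fun x => 1 / p x) volume a b)
    (hq : IntervalIntegrable q volume a b) (hw : IntervalIntegrable w volume a b)
    (hlam : lam.im ≠ 0) {c M : ℝ} (hc : 0 ≤ c) (hM : ∀ x ∈ Icc a b, ‖φ x‖ ≤ M)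
    (hreal : (boundaryForm φ u a b).im = 0)
    (hbound : (boundaryForm φ u a b).re ≤ c * max ‖φ a‖ ‖φ b‖ ^ 2) :
    weightedL2Norm (fun x => 1 / p x) u a b ^ 2 ≤
      (c + ∫ t in a..b, |min (q t) 0|) * M ^ 2 := by
  have hform := hs.boundaryForm_eq hp hq hw
  have horth : ∫ t in a..b, w t * ‖φ t‖ ^ 2 = 0 := by
    have him : lam.im * ∫ t in a..b, w t * ‖φ t‖ ^ 2 = 0 := by
      simpa only [hreal, add_im, sub_im, ofReal_im, im_mul_ofReal, add_zero, zero_sub,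
        zero_eq_neg] using congrArg im hform
    exact (mul_eq_zero.1 him).resolve_left hlam
  have henergy : (boundaryForm φ u a b).re =
      (∫ t in a..b, q t * ‖φ t‖ ^ 2) + ∫ t in a..b, 1 / p t * ‖u t‖ ^ 2 := by
    simpa only [horth, ofReal_zero, mul_zero, sub_zero, add_re, ofReal_re]
      using congrArg re hform
  have hboundary : c * max ‖φ a‖ ‖φ b‖ ^ 2 ≤ c * M ^ 2 := by
    gcongr
    exact max_le (hM a (left_mem_Icc.2 hab)) (hM b (right_mem_Icc.2 hab))
  have hqm : IntervalIntegrable (fun t => min (q t) 0) volume a b :=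
    ⟨hq.1.inf (integrable_zero _ _ _), hq.2.inf (integrable_zero _ _ _)⟩
  have hpotential :
      -∫ t in a..b, q t * ‖φ t‖ ^ 2 ≤ (∫ t in a..b, |min (q t) 0|) * M ^ 2 := by
    rw [← intervalIntegral.integral_neg, ← intervalIntegral.integral_mul_const]
    refine intervalIntegral.integral_mono_on hab
      (hq.mul_continuousOn (hs.continuousOn.norm.pow 2)).neg (hqm.abs.mul_const _) fun t ht => ?_
    calc -(q t * ‖φ t‖ ^ 2) ≤ |min (q t) 0| * ‖φ t‖ ^ 2 := by
          rw [← neg_mul]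
          gcongr
          exact (neg_le_neg (min_le_left _ _)).trans (neg_le_abs _)
      _ ≤ |min (q t) 0| * M ^ 2 := by
          gcongr
          exact hM t ht
  rw [sq_weightedL2Norm hab u (hp₀.mono fun x hx => one_div_nonneg.2 hx.le), add_mul]
  linarith

theorem a_priori_bounds (hs : IsSturmLiouvilleSolution p q w lam a b φ u) (hab : a < b)
    (hp₀ : ∀ᵐ x ∂volume.restrict (Ioc a b), 0 < p x)
    (hp : IntervalIntegrable (fun x => 1 / p x) volume a b)
    (hq : IntervalIntegrable q volume a b) (hw : IntervalIntegrable w volume a b)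
    (hlam : lam.im ≠ 0) {c α β γ : ℝ} (hc : 0 ≤ c)
    (hα : α = c + ∫ t in a..b, |min (q t) 0|)
    (hβ : β = √(α * (1 / (∫ t in a..b, 1 / p t) + α)) + α)
    (hγ : γ = √(2 * β + 1 / ∫ t in a..b, 1 / p t))
    (hreal : (boundaryForm φ u a b).im = 0)
    (hbound : (boundaryForm φ u a b).re ≤ c * max ‖φ a‖ ‖φ b‖ ^ 2) :
    weightedL2Norm (fun x => 1 / p x) u a b ≤ β * weightedL2Norm (fun x => 1 / p x) φ a b ∧
      ∀ x ∈ Icc a b, ‖φ x‖ ≤ γ * weightedL2Norm (fun x => 1 / p x) φ a b := by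
  obtain ⟨x₀, hx₀, hmax⟩ := isCompact_Icc.exists_isMaxOn (nonempty_Icc.2 hab.le)
    (by simpa [uIcc_of_le hab.le] using hs.continuousOn.norm)
  have hD := hs.sq_weightedL2Norm_quasiDeriv_le hab.le hp₀ hp hq hw hlam hc
    (fun x hx => hmax hx) hreal hbound
  have hM := hs.sq_norm_le hab hp₀ hp hx₀
  have hN := weightedL2Norm_nonneg (a := a) (b := b) (fun x => 1 / p x) φ
  have hκ : 0 ≤ 1 / ∫ t in a..b, 1 / p t := one_div_nonneg.2
    (intervalIntegral_pos_of_ae_pos hab hp (hp₀.mono fun x hx => one_div_pos.2 hx)).le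
  have hα₀ : 0 ≤ α :=
    hα ▸ add_nonneg hc (intervalIntegral.integral_nonneg hab.le fun x _ => abs_nonneg _)
  have hβ₀ : 0 ≤ β := by rw [hβ]; positivity
  have hγ₀ : 0 ≤ γ := hγ ▸ sqrt_nonneg _
  have hγsq : γ ^ 2 = 2 * β + 1 / ∫ t in a..b, 1 / p t := by rw [hγ, sq_sqrt (by positivity)]
  set N := weightedL2Norm (fun x => 1 / p x) φ a b
  have hDβ : weightedL2Norm (fun x => 1 / p x) u a b ≤ β * N := by
    rw [← hα] at hD
    exact hβ ▸ le_mul_of_sq_le_mul_sq hα₀ hκ hN hD hM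
  refine ⟨hDβ, fun x hx => (hmax hx).trans (abs_le_of_sq_le_sq' ?_ (by positivity)).2⟩
  rw [mul_pow, hγsq]
  linarith [mul_le_mul_of_nonneg_left hDβ hN]

theorem norm_integral_deriv_mul_le (hs : IsSturmLiouvilleSolution p q w lam a b φ u)
    (hab : a ≤ b) (hp₀ : ∀ᵐ x ∂volume.restrict (Ioc a b), 0 < p x)
    (hp : IntervalIntegrable (fun x => 1 / p x) volume a b)
    (hg' : IntervalIntegrable g' volume a b)
    (hg'2 : IntervalIntegrable (fun t => p t * g' t ^ 2) volume a b) {K : ℝ}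
    (hK : ∀ x ∈ Icc a b, ‖φ x‖ ≤ K) :
    ‖∫ t in a..b, g' t * u t * conj (φ t)‖ ≤
      √(∫ t in a..b, p t * g' t ^ 2) * weightedL2Norm (fun x => 1 / p x) u a b * K := by
  have hu := hs.continuousOn_quasiDeriv
  have hK₀ : 0 ≤ K := (norm_nonneg _).trans (hK a (left_mem_Icc.2 hab))
  have hnorm : weightedL2Norm p g' a b = √(∫ t in a..b, p t * g' t ^ 2) := by
    simp only [weightedL2Norm, norm_eq_abs, sq_abs]
  refine (norm_integral_mul_le_integral_norm_mul hab
    ((intervalIntegrable_ofReal hg').mul_continuousOn hu)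
    (h := fun t => conj (φ t)) (K := K) (by simpa using hK)).trans ?_
  rw [← hnorm]
  gcongr
  refine integral_le_weightedL2Norm_mul hab (by simpa using hg'2)
    (hp.mul_continuousOn (hu.norm.pow 2)) (hp₀.mono fun x hx => hx.le)
    (hp₀.mono fun x hx => one_div_nonneg.2 hx.le) (.of_forall fun x => norm_nonneg _) ?_
  filter_upwards [hp₀] with x hx
  rw [norm_mul, norm_real, mul_one_div_cancel hx.ne', one_mul]

end IsSturmLiouvilleSolution

/-- Outside the exceptional set `{p g w < ε}` the weight `g w` dominates `ε / p`; the exceptional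
set carries at most half of `∫ |φ|² / p`. -/
theorem half_mul_sq_weightedL2Norm_le_integral (hab : a ≤ b)
    (hp₀ : ∀ᵐ x ∂volume.restrict (Ioc a b), 0 < p x)
    (hp : IntervalIntegrable (fun x => 1 / p x) volume a b)
    (hw : IntervalIntegrable w volume a b) (hg : ContinuousOn g (uIcc a b))
    (hφ : ContinuousOn φ (uIcc a b)) (hgw : ∀ᵐ x ∂volume.restrict (Ioc a b), 0 ≤ g x * w x)
    {ε γ : ℝ} (hε : 0 ≤ ε) (hγ : γ ≠ 0)
    (hμ : (volume.withDensity fun x => ENNReal.ofReal (1 / p x))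
      {x | x ∈ Icc a b ∧ p x * g x * w x < ε} ≤ ENNReal.ofReal (1 / (2 * γ ^ 2)))
    (hφγ : ∀ x ∈ Icc a b, ‖φ x‖ ≤ γ * weightedL2Norm (fun x => 1 / p x) φ a b) :
    ε / 2 * weightedL2Norm (fun x => 1 / p x) φ a b ^ 2 ≤
      ∫ t in a..b, w t * ‖φ t‖ ^ 2 * g t := by
  set N := weightedL2Norm (fun x => 1 / p x) φ a b
  set μ := volume.restrict (Ioc a b)
  set ν := μ.withDensity fun x => ENNReal.ofReal (1 / p x)
  have hp₀' : ∀ᵐ x ∂μ, 0 ≤ 1 / p x := hp₀.mono fun x hx => one_div_nonneg.2 hx.le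
  have hφsq : ContinuousOn (fun x => ‖φ x‖ ^ 2) (uIcc a b) := hφ.norm.pow 2
  have hpm : AEMeasurable (fun x => 1 / p x) μ := hp.1.aemeasurable
  have hνμ : ν ≪ μ := withDensity_absolutelyContinuous _ _
  have hweight : (fun x => (1 / p x) • (p x * g x * w x * ‖φ x‖ ^ 2)) =ᵐ[μ]
      fun x => w x * ‖φ x‖ ^ 2 * g x := by
    filter_upwards [hp₀] with x hx
    rw [smul_eq_mul]
    field_simp
  have hν_exceptional : ν {x | p x * g x * w x < ε} ≤ ENNReal.ofReal (1 / (2 * γ ^ 2)) := by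
    rw [show ν = _ from (restrict_withDensity measurableSet_Ioc _).symm,
      Measure.restrict_apply' measurableSet_Ioc]
    refine (measure_mono fun x hx => ?_).trans hμ
    exact ⟨Ioc_subset_Icc_self hx.2, hx.1⟩
  have hchebyshev := mul_integral_sub_le_integral_mul (K := (γ * N) ^ 2)
    ((integrable_withDensity_ofReal_iff hpm hp₀').2 (hp.mul_continuousOn hφsq).1)
    ((integrable_withDensity_ofReal_iff hpm hp₀').2
      (((hw.mul_continuousOn hφsq).mul_continuousOn hg).1.congr hweight.symm))
    (.of_forall fun x => sq_nonneg _)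
    (hνμ.ae_le <| (ae_restrict_mem measurableSet_Ioc).mono fun x hx =>
      pow_le_pow_left₀ (norm_nonneg _) (hφγ x (Ioc_subset_Icc_self hx)) 2)
    (hνμ.ae_le <| by
      filter_upwards [hp₀, hgw] with x hx hgwx
      simpa only [Pi.zero_apply, mul_assoc] using mul_nonneg hx.le hgwx)
    hε (by positivity) (by positivity) hν_exceptional
  rw [integral_withDensity_ofReal hpm hp₀', integral_withDensity_ofReal hpm hp₀',
    integral_congr_ae hweight, ← intervalIntegral.integral_of_le hab,
    ← intervalIntegral.integral_of_le hab] at hchebyshev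
  simp only [smul_eq_mul] at hchebyshev
  rw [← sq_weightedL2Norm hab φ hp₀'] at hchebyshev
  refine le_of_eq_of_le ?_ hchebyshev
  field_simp
  ring

theorem abs_le_of_half_mul_le {s J N t ε : ℝ} (hε : 0 < ε) (hN : 0 < N)
    (hJ : ε / 2 * N ^ 2 ≤ J) (hst : |s * J| ≤ t * N ^ 2) : |s| ≤ 2 / ε * t := by
  have hsJ : |s| * (ε / 2) * N ^ 2 ≤ t * N ^ 2 := by
    rw [mul_assoc]
    exact (mul_le_mul_of_nonneg_left (hJ.trans (le_abs_self J)) (abs_nonneg s)).trans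
      ((abs_mul s J).symm.trans_le hst)
  rw [← inv_div, inv_mul_eq_div, le_div_iff₀ (by positivity)]
  exact le_of_mul_le_mul_right hsJ (by positivity)

theorem nonreal_eigenvalue_bounds_coupled_general (hab : a < b)
    (hp₀ : ∀ᵐ x ∂volume.restrict (Ioc a b), 0 < p x)
    (hp : IntervalIntegrable (fun x => 1 / p x) volume a b)
    (hq : IntervalIntegrable q volume a b) (hw : IntervalIntegrable w volume a b)
    {c α β γ : ℝ} (hc : 0 ≤ c) (hα : α = c + ∫ t in a..b, |min (q t) 0|)
    (hβ : β = √(α * (1 / (∫ t in a..b, 1 / p t) + α)) + α)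
    (hγ : γ = √(2 * β + 1 / ∫ t in a..b, 1 / p t))
    (hg : IsPrimitiveOn g g' a b) (hga : g a = 0) (hgb : g b = 0)
    (hg'2 : IntervalIntegrable (fun t => p t * g' t ^ 2) volume a b)
    (hgw : ∀ᵐ x ∂volume.restrict (Ioc a b), 0 ≤ g x * w x) {ε : ℝ} (hε : 0 < ε)
    (hμ : (volume.withDensity fun x => ENNReal.ofReal (1 / p x))
      {x | x ∈ Icc a b ∧ p x * g x * w x < ε} ≤ ENNReal.ofReal (1 / (2 * γ ^ 2)))
    (hlam : lam.im ≠ 0) (hs : IsSturmLiouvilleSolution p q w lam a b φ u)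
    (hφ : ∃ x ∈ Icc a b, φ x ≠ 0) (hreal : (boundaryForm φ u a b).im = 0)
    (hbound : (boundaryForm φ u a b).re ≤ c * max ‖φ a‖ ‖φ b‖ ^ 2) :
    |lam.im| ≤ 2 / ε * β * γ * √(∫ t in a..b, p t * g' t ^ 2) ∧
      |lam.re| ≤ 2 / ε * (β * γ * √(∫ t in a..b, p t * g' t ^ 2) +
        (β ^ 2 + γ ^ 2 * ∫ t in a..b, |q t|) * sSup ((fun x => |g x|) '' Icc a b)) := by
  obtain ⟨hD, hK⟩ := hs.a_priori_bounds hab hp₀ hp hq hw hlam hc hα hβ hγ hreal hbound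
  set G := √(∫ t in a..b, p t * g' t ^ 2)
  set S := sSup ((fun x => |g x|) '' Icc a b)
  set N := weightedL2Norm (fun x => 1 / p x) φ a b
  obtain ⟨x₀, hx₀, hφx₀⟩ := hφ
  have hγN : 0 < γ * N := (norm_pos_iff.2 hφx₀).trans_le (hK x₀ hx₀)
  have hN : 0 < N := (weightedL2Norm_nonneg _ _).lt_of_ne' (right_ne_zero_of_mul hγN.ne')
  have hJ := half_mul_sq_weightedL2Norm_le_integral hab.le hp₀ hp hw hg.continuousOn
    hs.continuousOn hgw hε.le (left_ne_zero_of_mul hγN.ne') hμ hK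
  have hS : ∀ x ∈ Icc a b, |g x| ≤ S := fun x hx => le_csSup
    (isCompact_Icc.bddAbove_image (by simpa [uIcc_of_le hab.le] using hg.continuousOn.abs))
    (mem_image_of_mem _ hx)
  have hT := (hs.norm_integral_deriv_mul_le hab.le hp₀ hp hg.intervalIntegrable hg'2 hK).trans
    (mul_le_mul_of_nonneg_right (mul_le_mul_of_nonneg_left hD (sqrt_nonneg _)) hγN.le)
  have hQ := abs_integral_mul_sq_norm_mul_le hab.le hq hK hS
  have hU : |∫ t in a..b, 1 / p t * ‖u t‖ ^ 2 * g t| ≤ (β * N) ^ 2 * S :=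
    (abs_integral_mul_sq_norm_mul_le_sq_weightedL2Norm_mul hab.le
      (hp₀.mono fun x hx => one_div_nonneg.2 hx.le)
      (hp.mul_continuousOn (hs.continuousOn_quasiDeriv.norm.pow 2)) hS).trans <| by
      gcongr
      · exact (abs_nonneg _).trans (hS x₀ hx₀)
      · exact weightedL2Norm_nonneg _ _
  have hid := hs.mul_integral_eq_of_eq_zero hp hq hw hg hga hgb
  set T := ∫ t in a..b, g' t * u t * conj (φ t)
  rw [mul_assoc, mul_assoc]
  refine ⟨abs_le_of_half_mul_le hε hN hJ ?_, abs_le_of_half_mul_le hε hN hJ ?_⟩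
  · rw [show lam.im * _ = T.im by simpa using congrArg im hid]
    linarith [(abs_im_le_norm T).trans hT]
  · rw [show lam.re * _ = _ + _ + T.re by
      simpa only [re_mul_ofReal, add_re, ofReal_re] using congrArg re hid]
    refine (abs_add_three _ _ _).trans ?_
    linarith [(abs_re_le_norm T).trans hT]

end SturmLiouville

section CoupledBoundaryConditions

variable {r11 r12 r21 r22 a b : ℝ} {φ u : ℝ → ℂ} {e : ℂ}

/-- The constant bounding the boundary form under the coupled boundary condition
`(φ(b), u(b)) = e^{iθ} R (φ(a), u(a))`; it does not involve `r22` when `r12 = 0`, because then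
`det R = 1` cancels the terms containing `u(a)`. -/
noncomputable def coupledConst (r11 r12 r21 r22 : ℝ) : ℝ :=
  if r12 = 0 then |r11 * r21| else (|r11| + |r22| + 2) / |r12|

theorem coupledConst_nonneg (r11 r12 r21 r22 : ℝ) : 0 ≤ coupledConst r11 r12 r21 r22 := by
  unfold coupledConst
  split_ifs <;> positivity

theorem im_boundaryForm_eq_zero_of_coupled (hdet : r11 * r22 - r12 * r21 = 1) (he : ‖e‖ = 1)
    (hφ : φ b = e * (r11 * φ a + r12 * u a)) (hu : u b = e * (r21 * φ a + r22 * u a)) :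
    (boundaryForm φ u a b).im = 0 := by
  have hee : e * conj e = 1 := by simp [mul_conj', he]
  have hphase : u b * conj (φ b) = (r21 * φ a + r22 * u a) * conj (r11 * φ a + r12 * u a) := by
    rw [hu, hφ, map_mul]
    linear_combination ((r21 : ℂ) * φ a + r22 * u a) * conj (r11 * φ a + r12 * u a) * hee
  rw [boundaryForm, hphase]
  simp only [map_add, map_mul, conj_ofReal, sub_im, mul_im, add_im, add_re, mul_re, ofReal_re,
    ofReal_im, conj_re, conj_im]
  linear_combination ((φ a).re * (u a).im - (φ a).im * (u a).re) * hdet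

theorem boundaryForm_eq_of_coupled_of_eq_zero (hdet : r11 * r22 = 1) (he : ‖e‖ = 1)
    (hφ : φ b = e * (r11 * φ a)) (hu : u b = e * (r21 * φ a + r22 * u a)) :
    boundaryForm φ u a b = (r11 * r21 : ℝ) * ‖φ a‖ ^ 2 := by
  have hee : e * conj e = 1 := by simp [mul_conj', he]
  have hdet' : (r11 : ℂ) * r22 = 1 := by exact_mod_cast hdet
  rw [boundaryForm, hu, hφ, ← mul_conj', map_mul, map_mul, conj_ofReal, ofReal_mul]
  linear_combination (r21 * φ a + r22 * u a) * r11 * conj (φ a) * hee + u a * conj (φ a) * hdet'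

theorem boundaryForm_mul_eq_of_coupled (hdet : r11 * r22 - r12 * r21 = 1) (he : ‖e‖ = 1)
    (hφ : φ b = e * (r11 * φ a + r12 * u a)) (hu : u b = e * (r21 * φ a + r22 * u a)) :
    boundaryForm φ u a b * r12 =
      r22 * (φ b * conj (φ b)) - e * (φ a * conj (φ b)) - conj e * (φ b * conj (φ a))
        + r11 * (φ a * conj (φ a)) := by
  have hee : e * conj e = 1 := by simp [mul_conj', he]
  have hdet' : (r11 : ℂ) * r22 - r12 * r21 = 1 := by exact_mod_cast hdet
  rw [boundaryForm, hu]
  linear_combination (-(e * φ a * conj (φ b))) * hdet' + (r11 * φ a + r12 * u a) * conj (φ a) * hee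
    + (conj e * conj (φ a) - r22 * conj (φ b)) * hφ

theorem norm_boundaryForm_le_of_coupled (hdet : r11 * r22 - r12 * r21 = 1) (he : ‖e‖ = 1)
    (hφ : φ b = e * (r11 * φ a + r12 * u a)) (hu : u b = e * (r21 * φ a + r22 * u a)) :
    ‖boundaryForm φ u a b‖ ≤ coupledConst r11 r12 r21 r22 * max ‖φ a‖ ‖φ b‖ ^ 2 := by
  set M := max ‖φ a‖ ‖φ b‖
  have hMa : ‖φ a‖ ≤ M := le_max_left _ _
  have hMb : ‖φ b‖ ≤ M := le_max_right _ _
  unfold coupledConst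
  split_ifs with h
  · subst h
    rw [boundaryForm_eq_of_coupled_of_eq_zero (by simpa using hdet) he (by simpa using hφ) hu,
      norm_mul, norm_pow, norm_real, norm_real, norm_norm, norm_eq_abs]
    gcongr
  · rw [div_mul_eq_mul_div, le_div_iff₀ (abs_pos.2 h), ← norm_eq_abs r12, ← norm_real, ← norm_mul,
      boundaryForm_mul_eq_of_coupled hdet he hφ hu]
    calc _ ≤ ‖r22 * (φ b * conj (φ b))‖ + ‖e * (φ a * conj (φ b))‖
          + ‖conj e * (φ b * conj (φ a))‖ + ‖r11 * (φ a * conj (φ a))‖ :=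
          norm_add_le_of_le (norm_sub_le_of_le (norm_sub_le _ _) le_rfl) le_rfl
      _ = |r22| * (‖φ b‖ * ‖φ b‖) + ‖φ a‖ * ‖φ b‖ + ‖φ b‖ * ‖φ a‖ + |r11| * (‖φ a‖ * ‖φ a‖) := by
          simp only [norm_mul, RCLike.norm_conj, norm_real, norm_eq_abs, he, one_mul]
      _ ≤ |r22| * (M * M) + M * M + M * M + |r11| * (M * M) := by gcongr
      _ = (|r11| + |r22| + 2) * M ^ 2 := by ring

end CoupledBoundaryConditions

/-- Theorem 3.2 of the paper for coupled self-adjoint boundary conditions: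
bounds on the real and imaginary parts of non-real eigenvalues of the
indefinite Sturm–Liouville problem. -/
theorem nonreal_eigenvalue_bounds_coupled
    (a b : ℝ) (hab : a < b) (p q w : ℝ → ℝ)
    (hpm : Measurable p) (hqm : Measurable q) (hwm : Measurable w)
    (hp_pos : ∀ᵐ x ∂(volume.restrict (Set.Ioc a b)), 0 < p x)
    (hp_int : IntegrableOn (fun x => 1 / p x) (Set.Ioc a b))
    (hq_int : IntegrableOn q (Set.Ioc a b))
    (hw_int : IntegrableOn w (Set.Ioc a b))
    (hw_ne : ∀ᵐ x ∂(volume.restrict (Set.Ioc a b)), w x ≠ 0)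
    (hw_pos : 0 < volume {x ∈ Set.Ioc a b | 0 < w x})
    (hw_neg : 0 < volume {x ∈ Set.Ioc a b | w x < 0})
    (θ : ℝ) (hθ : θ ∈ Set.Ico 0 (2 * π))
    (r11 r12 r21 r22 : ℝ) (hdet : r11 * r22 - r12 * r21 = 1)
    (c α β γ : ℝ)
    (hc : c = if r12 = 0 then |r11 * r21| else (|r11| + |r22| + 2) / |r12|)
    (hα : α = c + ∫ t in a..b, |min (q t) 0|)
    (hβ : β = Real.sqrt (α * (1 / (∫ t in a..b, 1 / p t) + α)) + α)
    (hγ : γ = Real.sqrt (2 * β + 1 / (∫ t in a..b, 1 / p t)))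
    -- the comparison function g, absolutely continuous with a.e. derivative g'
    (g g' : ℝ → ℝ) (hg'm : Measurable g')
    (hg'int : IntegrableOn g' (Set.Icc a b))
    (hgAC : ∀ x ∈ Set.Icc a b, g x = g a + ∫ t in a..x, g' t)
    (hga : g a = 0) (hgb : g b = 0)
    (hg'2 : IntegrableOn (fun t => p t * g' t ^ 2) (Set.Ioc a b))
    (hgw : ∀ᵐ x ∂(volume.restrict (Set.Ioc a b)), 0 < g x * w x)
    (ε : ℝ) (hε : 0 < ε)
    (hεcond : (volume.withDensity fun x => ENNReal.ofReal (1 / p x))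
        {x | x ∈ Set.Icc a b ∧ p x * g x * w x < ε} ≤ ENNReal.ofReal (1 / (2 * γ ^ 2))) :
    ∀ lam : ℂ, lam.im ≠ 0 →
      ∀ φ u : ℝ → ℂ,
        ContinuousOn φ (Set.Icc a b) → ContinuousOn u (Set.Icc a b) →
        (∀ x ∈ Set.Icc a b, φ x = φ a + ∫ t in a..x, u t / (p t : ℂ)) →
        (∀ x ∈ Set.Icc a b,
            u x = u a + ∫ t in a..x, ((q t : ℂ) - lam * (w t : ℂ)) * φ t) →
        (∃ x ∈ Set.Icc a b, φ x ≠ 0) →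
        φ b = Complex.exp (θ * Complex.I) * ((r11 : ℂ) * φ a + (r12 : ℂ) * u a) →
        u b = Complex.exp (θ * Complex.I) * ((r21 : ℂ) * φ a + (r22 : ℂ) * u a) →
        |lam.im| ≤ 2 / ε * β * γ * Real.sqrt (∫ t in a..b, p t * g' t ^ 2)
          ∧ |lam.re| ≤ 2 / ε *
              (β * γ * Real.sqrt (∫ t in a..b, p t * g' t ^ 2)
                + (β ^ 2 + γ ^ 2 * ∫ t in a..b, |q t|)
                    * sSup ((fun x => |g x|) '' Set.Icc a b)) := by
  intro lam hlam φ u hφc huc hφ hu hφ₀ hφb hub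
  rw [← uIcc_of_le hab.le] at hφc huc hφ hu hgAC
  rw [integrableOn_Icc_iff_integrableOn_Ioc] at hg'int
  rw [← intervalIntegrable_iff_integrableOn_Ioc_of_le hab.le] at hp_int hq_int hw_int hg'int hg'2
  have hs := IsSturmLiouvilleSolution.of_continuousOn hp_int hq_int hw_int hφc huc hφ hu
  have he := norm_exp_ofReal_mul_I θ
  exact nonreal_eigenvalue_bounds_coupled_general hab hp_pos hp_int hq_int hw_int
    (hc ▸ coupledConst_nonneg r11 r12 r21 r22) hα hβ hγ ⟨hg'int, hgAC⟩ hga hgb hg'2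
    (hgw.mono fun x hx => hx.le) hε hεcond hlam hs hφ₀
    (im_boundaryForm_eq_zero_of_coupled hdet he hφb hub)
    ((re_le_norm _).trans
      (hc ▸ norm_boundaryForm_le_of_coupled hdet he hφb hub))
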